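/- For every n ≥ 1, all λ_1, …, λ_n ∈ R, and every k with 2 ≤ k ≤ n, the modified weight λ̂_k can be rewritten with the first weight absorbed into a shift of the remaining ones: λ̂_k = Σ_{ℓ=2}^{k} C_{k,ℓ} · (λ_ℓ + ε_1 A^{(0)}_{ℓ,1} λ_1). -/

import Mathlib

open Finset

/-- Product of adjacency factors along a path `ℓ → j₁ → ⋯ → jₚ → k`:
for each consecutive pair `(a, b)` in the list, a factor `A^{(a-1)}_{b,a}`. -/
def pathProd {R : Type*} [CommRing R] (A : ℕ → ℕ → ℕ → R) : List ℕ → R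
  | [] => 1
  | [_] => 1
  | a :: b :: rest => A (a - 1) b a * pathProd A (b :: rest)

/-- The quantity `𝒜_{k,ℓ}(Q)` for a subset `Q = {j₁ < ⋯ < jₚ} ⊆ {ℓ+1,…,k−1}`. -/
def calA {R : Type*} [CommRing R] (ε : ℕ → R) (A : ℕ → ℕ → ℕ → R)
    (k ℓ : ℕ) (Q : Finset ℕ) : R :=
  (ε ℓ * ∏ j ∈ Q, ε j) * pathProd A (ℓ :: ((Q.sort (· ≤ ·)) ++ [k]))

/-- The coefficients `C_{k,ℓ}`: `C_{k,k} = 1` and, for `k > ℓ`,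
`C_{k,ℓ} = Σ_{Q ⊆ {ℓ+1,…,k−1}} 𝒜_{k,ℓ}(Q)`. -/
def Cgen {R : Type*} [CommRing R] (ε : ℕ → R) (A : ℕ → ℕ → ℕ → R) (k ℓ : ℕ) : R :=
  if k = ℓ then 1 else ∑ Q ∈ (Finset.Ioo ℓ k).powerset, calA ε A k ℓ Q

/-- The modified weight `λ̂ₖ = Σ_{ℓ=1}^{k} C_{k,ℓ} λ_ℓ`. -/
def lamHat {R : Type*} [CommRing R] (ε : ℕ → R) (A : ℕ → ℕ → ℕ → R)
    (lam : ℕ → R) (k : ℕ) : R :=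
  ∑ ℓ ∈ Finset.Icc 1 k, Cgen ε A k ℓ * lam ℓ

/-- Prepending a new smallest intermediate vertex to a path. -/
theorem calA_insert {R : Type*} [CommRing R] (ε : ℕ → R) (A : ℕ → ℕ → ℕ → R)
    (k ℓ j : ℕ) (Q : Finset ℕ) (hQ : ∀ i ∈ Q, j < i) :
    calA ε A k ℓ (insert j Q) = calA ε A k j Q * (ε ℓ * A (ℓ - 1) j ℓ) := by
  have hj : j ∉ Q := fun h => lt_irrefl _ (hQ j h)
  rw [calA, calA, Finset.prod_insert hj, Finset.sort_insert _ (fun i hi => (hQ i hi).le) hj,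
    List.cons_append, pathProd]
  ring

/-- Sorting the paths from `ℓ` to `k` with intermediate vertices above `m` by the first vertex
after `ℓ`. -/
theorem sum_calA_eq_sum_Cgen {R : Type*} [CommRing R] (ε : ℕ → R) (A : ℕ → ℕ → ℕ → R)
    (k ℓ m : ℕ) (hm : m < k) :
    ∑ Q ∈ (Finset.Ioo m k).powerset, calA ε A k ℓ Q
      = ∑ j ∈ Finset.Ioc m k, Cgen ε A k j * (ε ℓ * A (ℓ - 1) j ℓ) := by
  obtain ⟨d, rfl⟩ := Nat.exists_eq_add_of_lt hm
  induction d generalizing m with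
  | zero => simp [calA, Cgen, pathProd, Finset.Ioo_add_one_right_eq_Ioc]
  | succ d ih =>
    have hd : m + (d + 1) + 1 = m + 1 + d + 1 := by omega
    rw [hd]
    have hIoo : Finset.Ioo m (m + 1 + d + 1)
        = insert (m + 1) (Finset.Ioo (m + 1) (m + 1 + d + 1)) := by
      ext i; simp only [Finset.mem_Ioo, Finset.mem_insert]; omega
    have hIoc : Finset.Ioc m (m + 1 + d + 1)
        = insert (m + 1) (Finset.Ioc (m + 1) (m + 1 + d + 1)) := by
      ext i; simp only [Finset.mem_Ioc, Finset.mem_insert]; omega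
    rw [hIoo, hIoc, Finset.sum_powerset_insert (by simp), Finset.sum_insert (by simp),
      ih (m + 1) (by omega), Cgen, if_neg (by omega), Finset.sum_mul, add_comm]
    congr 1
    refine Finset.sum_congr rfl fun Q hQ => calA_insert ε A _ ℓ _ Q fun i hi => ?_
    exact (Finset.mem_Ioo.1 (Finset.mem_powerset.1 hQ hi)).1

/-- For every `n ≥ 1`, all `λ₁, …, λₙ ∈ R`, and every `k` with `2 ≤ k ≤ n`,
`λ̂ₖ = Σ_{ℓ=2}^{k} C_{k,ℓ} · (λ_ℓ + ε₁ A^{(0)}_{ℓ,1} λ₁)`. -/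
theorem lamHat_absorb_first {R : Type*} [CommRing R] (ε : ℕ → R) (A : ℕ → ℕ → ℕ → R)
    (n : ℕ) (hn : 1 ≤ n) (lam : ℕ → R) (k : ℕ) (h2 : 2 ≤ k) (hk : k ≤ n) :
    lamHat ε A lam k
      = ∑ ℓ ∈ Finset.Icc 2 k, Cgen ε A k ℓ * (lam ℓ + ε 1 * A 0 ℓ 1 * lam 1) := by
  have hIcc : Finset.Icc 2 k = Finset.Ioc 1 k := rfl
  have hC : Cgen ε A k 1 = ∑ j ∈ Finset.Ioc 1 k, Cgen ε A k j * (ε 1 * A 0 j 1) := by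
    rw [Cgen, if_neg (by omega), sum_calA_eq_sum_Cgen ε A k 1 1 h2]
  rw [lamHat, ← Finset.add_sum_Ioc_eq_sum_Icc (by omega), hC, hIcc, Finset.sum_mul,
    ← Finset.sum_add_distrib]
  exact Finset.sum_congr rfl fun j _ => by ring
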